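/- arXiv:2012.15663 — 2 statements merged into one kernel-verified Lean document; each statement's English description precedes it below -/
import Mathlib

section
/- Let n and h be positive integers with 2h ≤ n + 2, and let ζ ∈ ℂ be a root of the SP polynomial S(x,n,h). Then ζ ≠ 1 and ζ is a root of unity; more precisely, ζ^h = 1 or ζ^{n+2-h} = 1. -/
open Polynomial

/-- The staircase palindromic (SP) polynomial `S(x,n,h)` over `ℂ`, as a product of
the all-one polynomials of degrees `h-1` and `n+1-h`. -/
noncomputable def spPolyC (n h : ℕ) : ℂ[X] :=
  (∑ i ∈ Finset.range h, X ^ i) * (∑ i ∈ Finset.range (n + 2 - h), X ^ i)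

theorem stmt_4 (n h : ℕ) (hn : 0 < n) (hh : 0 < h) (hnh : 2 * h ≤ n + 2)
    (ζ : ℂ) (hζ : (spPolyC n h).eval ζ = 0) :
    ζ ≠ 1 ∧ (ζ ^ h = 1 ∨ ζ ^ (n + 2 - h) = 1) := by
  have key : ∀ m : ℕ, 0 < m → ∑ i ∈ Finset.range m, ζ ^ i = 0 → ζ ≠ 1 ∧ ζ ^ m = 1 := by
    intro m hm hs
    constructor
    · rintro rfl
      simp at hs
      omega
    · have h1 := geom_sum_mul ζ m
      rw [hs, zero_mul] at h1
      exact (sub_eq_zero.mp h1.symm)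
  simp only [spPolyC, eval_mul, eval_finset_sum, eval_pow, eval_X, mul_eq_zero] at hζ
  rcases hζ with h1 | h1
  · exact ⟨(key h hh h1).1, Or.inl (key h hh h1).2⟩
  · have hp : 0 < n + 2 - h := by omega
    exact ⟨(key _ hp h1).1, Or.inr (key _ hp h1).2⟩
end

section
/- Let n and h be positive integers with 2h ≤ n + 2. Then every complex root ζ of the SP polynomial S(x,n,h) satisfies |ζ| = 1, i.e., all roots of S(x,n,h) lie on the unit circle. -/
open Polynomial

theorem norm_one_of_geom (m : ℕ) (hm : 0 < m) (z : ℂ)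
    (hz : ∑ i ∈ Finset.range m, z ^ i = 0) : ‖z‖ = 1 := by
  have h1 : z ^ m = 1 := by
    have h := geom_sum_mul z m
    rw [hz, zero_mul] at h
    exact (sub_eq_zero.mp h.symm)
  exact Complex.norm_eq_one_of_pow_eq_one h1 hm.ne'

theorem stmt_5 (n h : ℕ) (hn : 0 < n) (hh : 0 < h) (hnh : 2 * h ≤ n + 2)
    (ζ : ℂ) (hζ : (spPolyC n h).eval ζ = 0) :
    ‖ζ‖ = 1 := by
  rw [spPolyC, eval_mul, eval_finset_sum, eval_finset_sum] at hζ
  simp only [eval_pow, eval_X] at hζ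
  rcases mul_eq_zero.mp hζ with h1 | h1
  · exact norm_one_of_geom _ hh ζ h1
  · exact norm_one_of_geom _ (by omega) ζ h1
end
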